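/- arXiv:1608.08464 — 5 statements merged into one kernel-verified Lean document; each statement's English description precedes it below -/
import Mathlib

section
/- For every integer m ≥ 3 there exists a unique real number b in the open interval (0,1) such that 1 + b^m − (m/2)(1 − b²) = 0. -/
/-!
The function `b ↦ 1 + b^m − (m/2)(1 − b²)` is strictly increasing on `[0, ∞)`, equals
`1 − m/2 < 0` at `0` (as `m > 2`) and `2` at `1`. Existence of a root in `(0,1)` is the
intermediate value theorem, and uniqueness is injectivity of a strictly monotone function.
-/

/-- For every integer `m ≥ 3` there exists a unique real `b ∈ (0,1)` with
`1 + b^m − (m/2)(1 − b²) = 0`. -/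
theorem unique_root_bm (m : ℕ) (hm : 3 ≤ m) :
    ∃! b : ℝ, b ∈ Set.Ioo (0 : ℝ) 1 ∧
      1 + b ^ m - (m : ℝ) / 2 * (1 - b ^ 2) = 0 := by
  have hm' : (3 : ℝ) ≤ m := by exact_mod_cast hm
  have hm0 : m ≠ 0 := by omega
  have hmono : StrictMonoOn (fun b : ℝ => 1 + b ^ m - (m : ℝ) / 2 * (1 - b ^ 2))
      (Set.Ici 0) := by
    intro x hx y _ hxy
    have h1 : x ^ m < y ^ m := pow_lt_pow_left₀ hxy hx hm0
    have h2 : x ^ 2 < y ^ 2 := pow_lt_pow_left₀ hxy hx two_ne_zero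
    dsimp only
    nlinarith
  have hcont : ContinuousOn (fun b : ℝ => 1 + b ^ m - (m : ℝ) / 2 * (1 - b ^ 2))
      (Set.Icc 0 1) := by fun_prop
  obtain ⟨b, hb, hb0⟩ := intermediate_value_Ioo zero_le_one hcont
    (show (0 : ℝ) ∈ Set.Ioo _ _ by
      constructor
      · simp only [zero_pow hm0]
        linarith
      · norm_num)
  refine ⟨b, ⟨hb, hb0⟩, ?_⟩
  rintro c ⟨hc, hc0⟩
  exact hmono.injOn hc.1.le hb.1.le (hc0.trans hb0.symm)
end

section
/- For every integer n ≥ 3 and every real b with 0 < b < 1, the inequality Δ_n(b) ≥ 0 holds if and only if (n/2)(1 − b²) − 1 ≥ b^n. -/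
/-!
With `A = (n/2)(1 - b²) - 1`, `Δ_n(b) = (A + b^n)(A - b^n)`. For `n ≥ 3` the factor `A + b^n` is
positive by the strict Bernoulli inequality (`delta_factor_pos`, proved by induction on `n`), so
the sign of `Δ_n(b)` is that of `A - b^n`.
-/

/-- `Δ_n(b) = ((n/2)(1 − b²) − 1)² − b^{2n}`. -/
noncomputable def Delta (n : ℕ) (b : ℝ) : ℝ :=
  ((n : ℝ) / 2 * (1 - b ^ 2) - 1) ^ 2 - b ^ (2 * n)

/-- Strict Bernoulli inequality `(b²)^(n/2) > 1 + (n/2)(b² - 1)`, valid because `n/2 > 1`. -/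
lemma delta_factor_pos (n : ℕ) (hn : 3 ≤ n) (b : ℝ) (hb : b ∈ Set.Ioo (0 : ℝ) 1) :
    0 < (n : ℝ) / 2 * (1 - b ^ 2) - 1 + b ^ n := by
  obtain ⟨h0, h1⟩ := hb
  induction n, hn using Nat.le_induction with
  | base =>
    have h : 0 < (1 - b) ^ 2 * (b + 1 / 2) :=
      mul_pos (pow_pos (by linarith) 2) (by linarith)
    push_cast
    linarith
  | succ k hk ih =>
    have hkb : b ^ k ≤ b := pow_le_of_le_one h0.le h1.le (by omega)
    -- this product is the increment of the expression from `k` to `k + 1`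
    have h : 0 < (1 - b) * ((1 + b) / 2 - b ^ k) :=
      mul_pos (by linarith) (by linarith)
    push_cast
    rw [pow_succ b k]
    linarith

/-- For every integer `n ≥ 3` and real `b ∈ (0,1)`, `Δ_n(b) ≥ 0` iff
`(n/2)(1 − b²) − 1 ≥ b^n`. -/
theorem delta_nonneg_iff (n : ℕ) (hn : 3 ≤ n) (b : ℝ) (hb : b ∈ Set.Ioo (0 : ℝ) 1) :
    0 ≤ Delta n b ↔ b ^ n ≤ (n : ℝ) / 2 * (1 - b ^ 2) - 1 := by
  -- `Δ_n(b)` is a difference of squares whose sum factor is positive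
  have hfac : Delta n b = ((n : ℝ) / 2 * (1 - b ^ 2) - 1 + b ^ n) *
      ((n : ℝ) / 2 * (1 - b ^ 2) - 1 - b ^ n) := by
    unfold Delta
    ring
  rw [hfac, mul_nonneg_iff_of_pos_left (delta_factor_pos n hn b hb), sub_nonneg]
end

section
/- Let b ∈ (0,1) and n ≥ 1 an integer such that Δ_n(b) < 0. Then for every real λ the matrix M_n(λ) is invertible. -/
open Matrix

/-- The matrix `M_n(λ)` with first row `(nλ − 1 − nb², b^{n+1})` and second row
`(−b^n, b(nλ − n + 1))`. -/
noncomputable def Mmat (b : ℝ) (n : ℕ) (lam : ℝ) : Matrix (Fin 2) (Fin 2) ℝ :=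
  !![(n : ℝ) * lam - 1 - n * b ^ 2, b ^ (n + 1);
     -b ^ n, b * ((n : ℝ) * lam - n + 1)]

/-- If `Δ_n(b) < 0` then `M_n(λ)` is invertible for every real `λ`. -/
theorem Mmat_invertible_of_delta_neg (b : ℝ) (hb : b ∈ Set.Ioo (0 : ℝ) 1)
    (n : ℕ) (hn : 1 ≤ n) (hD : Delta n b < 0) (lam : ℝ) :
    IsUnit (Mmat b n lam) := by
  rw [Matrix.isUnit_iff_isUnit_det, isUnit_iff_ne_zero]
  -- Completing the square in `n * lam`: the constant term that remains is `-Δ_n(b)`.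
  have hdet : (Mmat b n lam).det
      = b * (((n : ℝ) * lam - n * (1 + b ^ 2) / 2) ^ 2 - Delta n b) := by
    simp only [Mmat, Delta, Matrix.det_fin_two_of]
    ring
  rw [hdet]
  exact (mul_pos hb.1 (by linarith [sq_nonneg ((n : ℝ) * lam - n * (1 + b ^ 2) / 2)])).ne'
end

section
/- Let m ≥ 3 be an integer and b ∈ (0, b_m^*]. With λ_m^± = (1+b²)/2 ± (1/m)√(Δ_m(b)), both quantities m·λ_m^+ − m + 1 and m·λ_m^− − m + 1 are strictly negative. -/
/-- Let `m ≥ 3` and `b ∈ (0, b_m^*]`.  With `λ_m^± = (1+b²)/2 ± (1/m)√(Δ_m(b))`, both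
`m·λ_m^+ − m + 1` and `m·λ_m^− − m + 1` are strictly negative. -/
theorem eigenvalue_quantities_neg (m : ℕ) (hm : 3 ≤ m) (bs : ℝ)
    (hbs : bs ∈ Set.Ioo (0 : ℝ) 1)
    (hroot : 1 + bs ^ m - (m : ℝ) / 2 * (1 - bs ^ 2) = 0)
    (b : ℝ) (hb : b ∈ Set.Ioc (0 : ℝ) bs) :
    (m : ℝ) * ((1 + b ^ 2) / 2 + (1 / m : ℝ) * Real.sqrt (Delta m b)) - m + 1 < 0 ∧
    (m : ℝ) * ((1 + b ^ 2) / 2 - (1 / m : ℝ) * Real.sqrt (Delta m b)) - m + 1 < 0 := by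
  obtain ⟨hb0, hbb⟩ := hb
  have hm0 : (0 : ℝ) < m := by
    have : 0 < m := by omega
    exact_mod_cast this
  have hbsm : 0 < bs ^ m := pow_pos hbs.1 m
  have hbm : 0 < b ^ (2 * m) := pow_pos hb0 _
  have hsq : b ^ 2 ≤ bs ^ 2 := pow_le_pow_left₀ hb0.le hbb 2
  -- `A(b) = (m/2)(1 - b²) - 1` decreases in `b`, and the root equation says `A(bs) = bs ^ m`.
  have hA : 0 < (m : ℝ) / 2 * (1 - b ^ 2) - 1 := by
    have := mul_le_mul_of_nonneg_left hsq (half_pos hm0).le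
    linarith
  have hs : Real.sqrt (Delta m b) < (m : ℝ) / 2 * (1 - b ^ 2) - 1 := by
    rw [Real.sqrt_lt' hA, Delta]
    linarith
  have hs0 := Real.sqrt_nonneg (Delta m b)
  have hc : (m : ℝ) * ((1 / m : ℝ) * Real.sqrt (Delta m b)) = Real.sqrt (Delta m b) := by
    field_simp
  rw [mul_add, mul_sub, hc]
  constructor <;> linarith
end

section
/- Let m ≥ 3 be an integer and b ∈ (0, b_m^*]. With λ_m^+ = (1+b²)/2 + (1/m)√(Δ_m(b)), the quantity c_m(b) = −2m² b^{1−m} (m·λ_m^+ − m + 1)³ / ((m·λ_m^+ − m + 1)² + b^{2m})^{3/2} is strictly positive. -/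
/-- Let `m ≥ 3` and `b ∈ (0, b_m^*]`.  With `λ_m^+ = (1+b²)/2 + (1/m)√(Δ_m(b))`, the
quantity `c_m(b) = −2m² b^{1−m} (mλ_m^+ − m + 1)³ / ((mλ_m^+ − m + 1)² + b^{2m})^{3/2}`
is strictly positive. -/
theorem c_m_pos (m : ℕ) (hm : 3 ≤ m) (bs : ℝ) (hbs : bs ∈ Set.Ioo (0 : ℝ) 1)
    (hroot : 1 + bs ^ m - (m : ℝ) / 2 * (1 - bs ^ 2) = 0)
    (b : ℝ) (hb : b ∈ Set.Ioc (0 : ℝ) bs)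
    (lam : ℝ) (hlam : lam = (1 + b ^ 2) / 2 + (1 / m : ℝ) * Real.sqrt (Delta m b)) :
    0 < -2 * (m : ℝ) ^ 2 * b ^ ((1 : ℤ) - m) * ((m : ℝ) * lam - m + 1) ^ 3 /
        (((m : ℝ) * lam - m + 1) ^ 2 + b ^ (2 * m)) ^ ((3 : ℝ) / 2) := by
  obtain ⟨hb0, hbb⟩ := hb
  have hm0 : (0 : ℝ) < m := by
    have : 0 < m := by omega
    exact_mod_cast this
  -- The quantity `A` decreases in `b`, and the equation for `bs` says that its value there is `bs ^ m`.
  have hA : 0 < (m : ℝ) / 2 * (1 - b ^ 2) - 1 := by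
    have h1 : b ^ 2 ≤ bs ^ 2 := by gcongr
    have h2 : (m : ℝ) / 2 * (1 - bs ^ 2) ≤ (m : ℝ) / 2 * (1 - b ^ 2) := by gcongr
    have h3 : 0 < bs ^ m := pow_pos hbs.1 m
    linarith
  have hX : (m : ℝ) * lam - m + 1
      = Real.sqrt (Delta m b) - ((m : ℝ) / 2 * (1 - b ^ 2) - 1) := by
    rw [hlam]
    field_simp
    ring
  have hsqrt : Real.sqrt (Delta m b) < (m : ℝ) / 2 * (1 - b ^ 2) - 1 := by
    rw [Real.sqrt_lt' hA, Delta]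
    linarith [pow_pos hb0 (2 * m)]
  have hXneg : (m : ℝ) * lam - m + 1 < 0 := by linarith
  have hcube : ((m : ℝ) * lam - m + 1) ^ 3 < 0 := Odd.pow_neg (by decide) hXneg
  have hcoef : 0 < 2 * (m : ℝ) ^ 2 * b ^ ((1 : ℤ) - m) := by positivity
  apply div_pos
  · linarith [mul_pos hcoef (neg_pos.mpr hcube)]
  · positivity
end
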